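/- The family of (M₀) stable laws is identifiable on the interior of the parameter space: if θ, θ' ∈ Θ_M° and θ ≠ θ', then there exists t ∈ ℝ with φ(t;θ) ≠ φ(t;θ'), and consequently the densities f(·;θ) and f(·;θ') are not equal. -/

import Mathlib

open MeasureTheory Filter

noncomputable section

def ThetaInt : Set (Fin 4 → ℝ) :=
  {θ | 0 < θ 1 ∧ θ 2 ∈ Set.Ioo (0:ℝ) 2 ∧ θ 3 ∈ Set.Ioo (-1:ℝ) 1}

/-- Cumulant (log characteristic function) of the continuous (M₀) parameterization,
with `θ = (μ, σ, α, β)`. -/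
def psiM (θ : Fin 4 → ℝ) (t : ℝ) : ℂ :=
  if θ 2 = 1 then
    ((-(|θ 1 * t|) : ℝ) : ℂ)
      - Complex.I * (((2 * θ 3 / Real.pi) * (θ 1 * t) * Real.log |θ 1 * t| : ℝ) : ℂ)
      + Complex.I * ((θ 0 * t : ℝ) : ℂ)
  else
    ((-(|θ 1 * t| ^ (θ 2)) : ℝ) : ℂ) *
        (1 + Complex.I * ((θ 3 * Real.sign t * Real.tan (Real.pi * θ 2 / 2)
            * (|θ 1 * t| ^ (1 - θ 2) - 1) : ℝ) : ℂ))
      + Complex.I * ((θ 0 * t : ℝ) : ℂ)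

/-- Characteristic function of the (M₀) parameterization. -/
def phiM (θ : Fin 4 → ℝ) (t : ℝ) : ℂ := Complex.exp (psiM θ t)

/-- Stable density in the (M₀) parameterization, via Fourier inversion. -/
def fM (θ : Fin 4 → ℝ) (x : ℝ) : ℝ :=
  (1 / (2 * Real.pi)) *
    (∫ t : ℝ, Complex.exp (-Complex.I * (t : ℂ) * (x : ℂ)) * phiM θ t).re

/-- Partial derivative of the density in parameter `i`. -/
def fP (i : Fin 4) (θ : Fin 4 → ℝ) (x : ℝ) : ℝ :=
  deriv (fun s => fM (Function.update θ i s) x) (θ i)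

/-- Second partial derivative of the density in parameters `i`, `j`. -/
def fPP (i j : Fin 4) (θ : Fin 4 → ℝ) (x : ℝ) : ℝ :=
  deriv (fun s => fP i (Function.update θ j s) x) (θ j)

/-- Derivative of the density in `x`. -/
def fX (θ : Fin 4 → ℝ) (x : ℝ) : ℝ := deriv (fun y => fM θ y) x

/-- Mixed derivative `∂²f/∂x∂θᵢ`. -/
def fPX (i : Fin 4) (θ : Fin 4 → ℝ) (x : ℝ) : ℝ := deriv (fun y => fP i θ y) x

/-- Score functions. -/
def ellP (i : Fin 4) (θ : Fin 4 → ℝ) (x : ℝ) : ℝ := fP i θ x / fM θ x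

/-- Derivative of the score in `x`. -/
def ellPX (i : Fin 4) (θ : Fin 4 → ℝ) (x : ℝ) : ℝ := deriv (fun y => ellP i θ y) x

/-- Derivative of the score `ℓ_{θᵢ}` in the parameter `θⱼ`. -/
def ellPP (i j : Fin 4) (θ : Fin 4 → ℝ) (x : ℝ) : ℝ :=
  deriv (fun s => ellP i (Function.update θ j s) x) (θ j)

/-- `h = O(r)` as `|x| → ∞`. -/
def IsBigOAtInfty (h r : ℝ → ℝ) : Prop :=
  ∃ c > 0, ∃ M > 0, ∀ x : ℝ, M ≤ |x| → |h x| ≤ c * r x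


end

open Topology FourierTransform

noncomputable def stH (α u : ℝ) : ℝ :=
  if α = 1 then -(2 / Real.pi) * Real.log u
  else Real.tan (Real.pi * α / 2) * (u ^ (α - 1) - 1)

noncomputable def stE (α u : ℝ) : ℝ :=
  if α = 1 then -(2 / Real.pi) * (u * Real.log u)
  else Real.tan (Real.pi * α / 2) * (u ^ α - u)

lemma stE_zero {α : ℝ} (h : 0 < α) : stE α 0 = 0 := by
  unfold stE
  split_ifs
  · simp
  · simp [Real.zero_rpow h.ne']

lemma stE_eq {α u : ℝ} (h : 0 < α) (hu : 0 ≤ u) : u * stH α u = stE α u := by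
  rcases hu.eq_or_lt with rfl | hu
  · rw [stE_zero h]; simp
  · unfold stE stH
    split_ifs
    · ring
    · rw [Real.rpow_sub_one hu.ne']; field_simp

lemma stE_cont {α : ℝ} (h : 0 < α) : Continuous (stE α) := by
  unfold stE
  split_ifs
  · exact continuous_const.mul Real.continuous_mul_log
  · exact continuous_const.mul ((Real.continuous_rpow_const h.le).sub continuous_id)

lemma stH_cont {α u : ℝ} (hu : 0 < u) : ContinuousAt (stH α) u := by
  unfold stH
  split_ifs
  · exact continuousAt_const.mul (Real.continuousAt_log hu.ne')
  · exact continuousAt_const.mul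
      ((Real.continuousAt_rpow_const u _ (Or.inl hu.ne')).sub continuousAt_const)

lemma tan_ne {α : ℝ} (h : α ∈ Set.Ioo (0:ℝ) 2) (h1 : α ≠ 1) :
    Real.tan (Real.pi * α / 2) ≠ 0 := by
  have hp := Real.pi_pos
  have hs : 0 < Real.sin (Real.pi * α / 2) := by
    apply Real.sin_pos_of_pos_of_lt_pi
    · have := mul_pos hp h.1; linarith
    · nlinarith [h.2]
  have hc : Real.cos (Real.pi * α / 2) ≠ 0 := by
    intro hc
    apply h1
    have h2 := Real.injOn_cos (x₁ := Real.pi * α / 2) (x₂ := Real.pi / 2)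
      ⟨by have := mul_pos hp h.1; linarith, by nlinarith [h.2]⟩
      ⟨by linarith, by linarith⟩ (by rw [hc, Real.cos_pi_div_two])
    have : Real.pi * α = Real.pi * 1 := by linarith
    exact mul_left_cancel₀ hp.ne' this
  rw [Real.tan_eq_sin_div_cos]
  exact div_ne_zero hs.ne' hc

lemma stH_ne {α u : ℝ} (h : α ∈ Set.Ioo (0:ℝ) 2) (hu : 0 < u) : stH α (u / 2) ≠ stH α u := by
  unfold stH
  split_ifs with h1
  · intro e
    have hp := Real.pi_pos
    have h2 : -(2 / Real.pi) ≠ 0 := by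
      have : 0 < 2 / Real.pi := by positivity
      linarith
    have := mul_left_cancel₀ h2 e
    have := Real.log_lt_log (by positivity : 0 < u / 2) (by linarith : u / 2 < u)
    linarith
  · intro e
    have e := mul_left_cancel₀ (tan_ne h h1) e
    have e : (u / 2) ^ (α - 1) = u ^ (α - 1) := by linarith
    have := (Real.rpow_left_inj (by positivity) hu.le (sub_ne_zero.2 h1)).1 e
    linarith

noncomputable def stK (α σ t : ℝ) : ℝ := t * stH α (σ * |t|)

lemma stK_zero (α σ : ℝ) : stK α σ 0 = 0 := by simp [stK]

lemma stK_cont {α σ : ℝ} (h : 0 < α) (hσ : 0 < σ) : Continuous (stK α σ) := by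
  rw [continuous_iff_continuousAt]
  intro t
  by_cases ht : t = 0
  · subst ht
    unfold ContinuousAt
    rw [stK_zero]
    apply squeeze_zero_norm (a := fun t => |stE α (σ * |t|)| / σ)
    · intro t
      rw [← stE_eq h (by positivity), stK, abs_mul, abs_of_nonneg (by positivity : 0 ≤ σ * |t|),
        Real.norm_eq_abs, abs_mul]
      apply le_of_eq
      field_simp
    · have hc : Continuous fun t : ℝ => |stE α (σ * |t|)| / σ :=
        (((stE_cont h).comp (continuous_const.mul continuous_abs)).abs).div_const σ
      have := hc.tendsto 0
      simpa [stE_zero h] using this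
  · have hu : 0 < σ * |t| := by positivity
    have h1 : ContinuousAt (fun t : ℝ => stH α (σ * |t|)) t :=
      ContinuousAt.comp (g := stH α) (f := fun t : ℝ => σ * |t|) (stH_cont hu)
        (continuous_const.mul continuous_abs).continuousAt
    exact continuousAt_id.mul h1

lemma psiM_eq {θ : Fin 4 → ℝ} (hθ : θ ∈ ThetaInt) (t : ℝ) :
    psiM θ t = ((-((θ 1 * |t|) ^ (θ 2)) : ℝ) : ℂ) +
      ((θ 0 * t + θ 3 * θ 1 * stK (θ 2) (θ 1) t : ℝ) : ℂ) * Complex.I := by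
  obtain ⟨h1, ⟨h2, -⟩, -⟩ := hθ
  have ha : |θ 1 * t| = θ 1 * |t| := by rw [abs_mul, abs_of_pos h1]
  unfold psiM stK stH
  rw [ha]
  split_ifs with h
  · rw [h, Real.rpow_one]
    push_cast
    ring
  · by_cases ht : t = 0
    · subst ht
      simp [Real.zero_rpow h2.ne']
    have hu : 0 < θ 1 * |t| := by positivity
    have key : -(θ 1 * |t|) ^ θ 2 * (θ 3 * Real.sign t * Real.tan (Real.pi * θ 2 / 2)
            * ((θ 1 * |t|) ^ (1 - θ 2) - 1)) = 
        θ 3 * θ 1 * (t * (Real.tan (Real.pi * θ 2 / 2) * ((θ 1 * |t|) ^ (θ 2 - 1) - 1))) := by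
      have e1 : (θ 1 * |t|) ^ θ 2 * (θ 1 * |t|) ^ (1 - θ 2) = θ 1 * |t| := by
        rw [← Real.rpow_add hu]; simp
      have e2 : (θ 1 * |t|) ^ θ 2 = (θ 1 * |t|) ^ (θ 2 - 1) * (θ 1 * |t|) := by
        rw [← Real.rpow_add_one hu.ne']; simp
      have e3 : Real.sign t * |t| = t := by
        rcases lt_or_gt_of_ne ht with h | h
        · rw [Real.sign_of_neg h, abs_of_neg h]; ring
        · rw [Real.sign_of_pos h, abs_of_pos h]; ring
      calc _ = -(θ 3 * Real.sign t * Real.tan (Real.pi * θ 2 / 2)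
            * ((θ 1 * |t|) ^ θ 2 * (θ 1 * |t|) ^ (1 - θ 2) - (θ 1 * |t|) ^ θ 2)) := by ring
        _ = -(θ 3 * Real.sign t * Real.tan (Real.pi * θ 2 / 2)
            * (θ 1 * |t| - (θ 1 * |t|) ^ (θ 2 - 1) * (θ 1 * |t|))) := by rw [e1, e2]
        _ = θ 3 * θ 1 * ((Real.sign t * |t|) *
            (Real.tan (Real.pi * θ 2 / 2) * ((θ 1 * |t|) ^ (θ 2 - 1) - 1))) := by ring
        _ = _ := by rw [e3]
    rw [← key]
    push_cast
    ring

lemma norm_phiM {θ : Fin 4 → ℝ} (hθ : θ ∈ ThetaInt) (t : ℝ) :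
    ‖phiM θ t‖ = Real.exp (-((θ 1 * |t|) ^ (θ 2))) := by
  rw [phiM, psiM_eq hθ, Complex.norm_exp, Complex.add_re, Complex.ofReal_re,
    Complex.re_ofReal_mul, Complex.I_re, mul_zero, add_zero]

lemma phiM_cont {θ : Fin 4 → ℝ} (hθ : θ ∈ ThetaInt) : Continuous (phiM θ) := by
  have : phiM θ = fun t => Complex.exp (((-((θ 1 * |t|) ^ (θ 2)) : ℝ) : ℂ) +
      ((θ 0 * t + θ 3 * θ 1 * stK (θ 2) (θ 1) t : ℝ) : ℂ) * Complex.I) := by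
    ext t; rw [phiM, psiM_eq hθ]
  rw [this]
  have hK := stK_cont (σ := θ 1) hθ.2.1.1 hθ.1
  have h1 : Continuous fun t : ℝ => (θ 1 * |t|) ^ (θ 2) :=
    (Real.continuous_rpow_const hθ.2.1.1.le).comp (continuous_const.mul continuous_abs)
  fun_prop

lemma phiM_neg {θ : Fin 4 → ℝ} (hθ : θ ∈ ThetaInt) (t : ℝ) :
    phiM θ (-t) = (starRingEnd ℂ) (phiM θ t) := by
  rw [phiM, phiM, psiM_eq hθ, psiM_eq hθ, ← Complex.exp_conj]
  congr 1
  simp only [map_add, map_mul, Complex.conj_ofReal, Complex.conj_I, stK, abs_neg]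
  push_cast
  ring

lemma integrable_of_even {f : ℝ → ℝ} (he : ∀ x, f (-x) = f x) (hf : IntegrableOn f (Set.Ioi 0)) :
    Integrable f := by
  have h2 : IntegrableOn f (Set.Iio 0) := by
    have := ((Measure.measurePreserving_neg (volume : Measure ℝ)).integrableOn_comp_preimage
      (Homeomorph.neg ℝ).measurableEmbedding (f := f) (s := Set.Ioi 0)).2 hf
    have e : f ∘ Neg.neg = f := by ext x; exact he x
    rw [e] at this
    simpa using this
  rw [← integrableOn_univ, ← Set.Iic_union_Ioi (a := (0:ℝ)), integrableOn_union]
  exact ⟨(integrableOn_Iic_iff_integrableOn_Iio (by simp)).2 h2, hf⟩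

lemma phiM_int {θ : Fin 4 → ℝ} (hθ : θ ∈ ThetaInt) : Integrable (phiM θ) := by
  rw [← integrable_norm_iff (phiM_cont hθ).aestronglyMeasurable]
  apply integrable_of_even
  · intro x; rw [norm_phiM hθ, norm_phiM hθ, abs_neg]
  · have h := integrableOn_rpow_mul_exp_neg_mul_rpow (s := 0) (by norm_num) hθ.2.1.1
      (Real.rpow_pos_of_pos hθ.1 (θ 2))
    refine h.congr_fun (fun x hx => ?_) measurableSet_Ioi
    have hx : 0 < x := hx
    simp only []
    rw [norm_phiM hθ, abs_of_pos hx, Real.mul_rpow hθ.1.le hx.le, Real.rpow_zero]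
    simp

lemma int_real {θ : Fin 4 → ℝ} (hθ : θ ∈ ThetaInt) (x : ℝ) :
    (∫ t : ℝ, Complex.exp (-Complex.I * (t : ℂ) * (x : ℂ)) * phiM θ t) =
    (((∫ t : ℝ, Complex.exp (-Complex.I * (t : ℂ) * (x : ℂ)) * phiM θ t).re : ℝ) : ℂ) := by
  symm
  rw [← Complex.conj_eq_iff_re, ← integral_conj,
    ← integral_neg_eq_self (fun t : ℝ => Complex.exp (-Complex.I * (t : ℂ) * (x : ℂ)) * phiM θ t)]
  congr 1
  ext t
  rw [phiM_neg hθ, map_mul, ← Complex.exp_conj]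
  simp

lemma phi_eq_of_f {θ θ' : Fin 4 → ℝ} (hθ : θ ∈ ThetaInt) (hθ' : θ' ∈ ThetaInt)
    (h : fM θ = fM θ') : phiM θ = phiM θ' := by
  have hI : ∀ x : ℝ, (∫ t : ℝ, Complex.exp (-Complex.I * (t : ℂ) * (x : ℂ)) * phiM θ t) =
      ∫ t : ℝ, Complex.exp (-Complex.I * (t : ℂ) * (x : ℂ)) * phiM θ' t := by
    intro x
    rw [int_real hθ, int_real hθ']
    have := congrFun h x
    unfold fM at this
    have hp : (1 / (2 * Real.pi)) ≠ 0 := by have := Real.pi_pos; positivity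
    rw [mul_left_cancel₀ hp this]
  have hF : 𝓕 (phiM θ) = 𝓕 (phiM θ') := by
    ext w
    rw [Real.fourier_real_eq_integral_exp_smul, Real.fourier_real_eq_integral_exp_smul]
    have e : ∀ v : ℝ, ((-2 * Real.pi * v * w : ℝ) : ℂ) * Complex.I =
        -Complex.I * (v : ℂ) * ((2 * Real.pi * w : ℝ) : ℂ) := by
      intro v; push_cast; ring
    simp only [e, smul_eq_mul]
    exact hI (2 * Real.pi * w)
  have hd : 𝓕 (phiM θ - phiM θ') = 0 := by
    ext w
    have hF := congrFun hF w
    rw [Real.fourier_real_eq] at hF ⊢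
    rw [Real.fourier_real_eq] at hF
    have i1 := (Real.fourierIntegral_convergent_iff (μ := volume) (f := phiM θ) w).2 (phiM_int hθ)
    have i2 := (Real.fourierIntegral_convergent_iff (μ := volume) (f := phiM θ') w).2 (phiM_int hθ')
    simp only [RCLike.inner_apply, conj_trivial] at i1 i2
    simp only [Pi.sub_apply, smul_sub, Pi.zero_apply]
    rw [integral_sub, hF, sub_self]
    · simpa [mul_comm] using i1
    · simpa [mul_comm] using i2
  have := ((phiM_cont hθ).sub (phiM_cont hθ')).fourierInv_fourier_eq
    ((phiM_int hθ).sub (phiM_int hθ')) (by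
      change Integrable (𝓕 (phiM θ - phiM θ'))
      rw [hd]; exact integrable_zero _ _ _)
  change 𝓕⁻ (𝓕 (phiM θ - phiM θ')) = phiM θ - phiM θ' at this
  rw [hd] at this
  rw [← sub_eq_zero, ← this]
  ext w
  simp [Real.fourierInv_eq]

lemma eq_of_phi {θ θ' : Fin 4 → ℝ} (hθ : θ ∈ ThetaInt) (hθ' : θ' ∈ ThetaInt)
    (h : ∀ t, phiM θ t = phiM θ' t) : θ = θ' := by
  have hn : ∀ t : ℝ, (θ 1 * |t|) ^ (θ 2) = (θ' 1 * |t|) ^ (θ' 2) := by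
    intro t
    have := congrArg norm (h t)
    rw [norm_phiM hθ, norm_phiM hθ', Real.exp_eq_exp] at this
    linarith
  have n1 := hn 1
  have n2 := hn 2
  simp only [abs_one, mul_one] at n1
  rw [abs_two, Real.mul_rpow hθ.1.le zero_le_two, Real.mul_rpow hθ'.1.le zero_le_two, n1] at n2
  have n2 := mul_left_cancel₀ (Real.rpow_pos_of_pos hθ'.1 _).ne' n2
  have hα : θ 2 = θ' 2 := (Real.rpow_right_inj zero_lt_two (by norm_num)).1 n2
  rw [← hα] at n1
  have hσ : θ 1 = θ' 1 := (Real.rpow_left_inj hθ.1.le hθ'.1.le hθ.2.1.1.ne').1 n1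
  set d : ℝ → ℝ := fun t => (θ 0 * t + θ 3 * θ 1 * stK (θ 2) (θ 1) t) -
    (θ' 0 * t + θ' 3 * θ 1 * stK (θ 2) (θ 1) t) with hd
  have hdc : Continuous d := by
    have hK := stK_cont (σ := θ 1) hθ.2.1.1 hθ.1
    fun_prop
  have hd0 : d 0 = 0 := by simp [hd, stK_zero]
  have hdz : ∀ t, ∃ n : ℤ, d t = n * (2 * Real.pi) := by
    intro t
    have := h t
    rw [phiM, phiM, Complex.exp_eq_exp_iff_exists_int] at this
    obtain ⟨n, hn⟩ := this
    refine ⟨n, ?_⟩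
    rw [psiM_eq hθ, psiM_eq hθ', ← hα, ← hσ] at hn
    have := congrArg Complex.im hn
    simp at this
    simp only [hd]
    linarith
  have hp := Real.pi_pos
  have hev : ∀ᶠ t in 𝓝 (0:ℝ), |d t| < 2 * Real.pi := by
    have : Tendsto (fun t => |d t|) (𝓝 0) (𝓝 0) := by
      simpa [hd0] using hdc.abs.tendsto 0
    exact this.eventually (gt_mem_nhds (by positivity))
  obtain ⟨ε, hε, hb⟩ := Metric.eventually_nhds_iff.1 hev
  have hz : ∀ t, 0 < t → t < ε → d t = 0 := by
    intro t h0 h1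
    have hlt := hb (y := t) (by rw [Real.dist_eq, sub_zero, abs_of_pos h0]; exact h1)
    obtain ⟨n, hn⟩ := hdz t
    rw [hn, abs_mul, abs_of_pos (by positivity : 0 < 2 * Real.pi)] at hlt
    have h3 : |(n:ℝ)| < 1 := by
      by_contra h4
      push Not at h4
      nlinarith
    have h4 : |n| < 1 := by exact_mod_cast h3
    rw [hn, Int.abs_lt_one_iff.1 h4]; simp
  have hz' : ∀ t, 0 < t → t < ε →
      (θ 0 - θ' 0) + (θ 3 - θ' 3) * θ 1 * stH (θ 2) (θ 1 * t) = 0 := by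
    intro t h0 h1
    have := hz t h0 h1
    simp only [hd, stK, abs_of_pos h0] at this
    apply mul_left_cancel₀ h0.ne'
    linarith
  have a1 := hz' (ε / 2) (by positivity) (by linarith)
  have a2 := hz' (ε / 2 / 2) (by positivity) (by linarith)
  have hne := stH_ne hθ.2.1 (u := θ 1 * (ε / 2)) (mul_pos hθ.1 (by positivity))
  rw [mul_div_assoc] at hne
  have a3 : (θ 3 - θ' 3) *
      (θ 1 * (stH (θ 2) (θ 1 * (ε / 2 / 2)) - stH (θ 2) (θ 1 * (ε / 2)))) = 0 := by
    linarith
  have hβ : θ 3 - θ' 3 = 0 := by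
    rcases mul_eq_zero.1 a3 with h | h
    · exact h
    · exact absurd h (mul_ne_zero hθ.1.ne' (sub_ne_zero.2 hne))
  rw [hβ] at a1
  have hμ : θ 0 - θ' 0 = 0 := by linarith
  ext i
  fin_cases i
  · exact sub_eq_zero.1 hμ
  · exact hσ
  · exact hα
  · exact sub_eq_zero.1 hβ

/-- Identifiability of the (M₀) family on the interior of the parameter
space: distinct parameters yield distinct characteristic functions, and consequently
distinct densities. -/
theorem stable_identifiable :
    ∀ θ ∈ ThetaInt, ∀ θ' ∈ ThetaInt, θ ≠ θ' →
      (∃ t : ℝ, phiM θ t ≠ phiM θ' t) ∧ fM θ ≠ fM θ' := by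
  intro θ hθ θ' hθ' hne
  refine ⟨?_, fun hf => ?_⟩
  · by_contra hc
    push Not at hc
    exact hne (eq_of_phi hθ hθ' hc)
  · exact hne (eq_of_phi hθ hθ' (fun t => congrFun (phi_eq_of_f hθ hθ' hf) t))
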